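/- (Example 4.1, second CVT) Let P be the classical Cantor distribution: r₁ = r₂ = 1/3, p₁ = p₂ = 1/2, P = (1/2)·(P∘S₁⁻¹) + (1/2)·(P∘S₂⁻¹), and assume P([0,1]) = 1. Then the set α = {1/6, 13/18, 17/18} together with the cells J₁ = [0, 1/3], J₂₁ = [2/3, 7/9], J₂₂ = [8/9, 1] forms a centroidal Voronoi tessellation with three means: (i) P(J₁ ∪ J₂₁ ∪ J₂₂) = 1; (ii) the centroids satisfy (1/P(J₁)) ∫_{J₁} x dP(x) = 1/6, (1/P(J₂₁)) ∫_{J₂₁} x dP(x) = 13/18, and (1/P(J₂₂)) ∫_{J₂₂} x dP(x) = 17/18; and (iii) every x ∈ J₁ satisfies |x − 1/6| = min_{b ∈ α} |x − b|, every x ∈ J₂₁ satisfies |x − 13/18| = min_{b ∈ α} |x − b|, and every x ∈ J₂₂ satisfies |x − 17/18| = min_{b ∈ α} |x − b|. -/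

import Mathlib

open MeasureTheory

/-!
Let `f` be an injective iterated function system which sends `K` into pairwise disjoint subsets of
`K`, and let `P` be a self-similar probability measure carried by `K`. Only the `i`-th term of the
self-similarity equation charges `f i '' K`, so, inductively, the restriction of `P` to the cell
`f σ '' K` of a word `σ` is a multiple of the image of `P` under `f σ`. If the maps are affine, the
centroid of that cell is therefore the image under `f σ` of the mean of `P`, and the mean is the
fixed point of the weighted sum of the maps. For the Cantor distribution the mean solves
`m = m / 3 + 1 / 3`, hence `m = 1 / 2`, and the three centroids are `f₀ m`, `f₁ (f₀ m)` and
`f₁ (f₁ m)`.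
-/

open Set
open scoped ENNReal

section SelfSimilar

variable {ι α : Type*}

/-- `P` is self-similar for the iterated function system `f` with weights `w`: it is the
`w`-weighted sum of its images under the maps `f i`. -/
def IsSelfSimilar [Fintype ι] [MeasurableSpace α] (w : ι → ℝ≥0∞) (f : ι → α → α)
    (P : Measure α) : Prop :=
  P = ∑ i, w i • P.map (f i)

/-- The composition `f i₁ ∘ ⋯ ∘ f iₖ` along a word `σ = [i₁, …, iₖ]`, written `S_σ` in the theory
of iterated function systems. -/
def wordMap (f : ι → α → α) (σ : List ι) (x : α) : α :=
  σ.foldr f x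

lemma wordMap_cons (f : ι → α → α) (i : ι) (σ : List ι) :
    wordMap f (i :: σ) = f i ∘ wordMap f σ :=
  rfl

lemma mapsTo_wordMap {f : ι → α → α} {K : Set α} (hfK : ∀ i, MapsTo (f i) K K) (σ : List ι) :
    MapsTo (wordMap f σ) K K := by
  induction σ with
  | nil => exact mapsTo_id K
  | cons i σ ih => exact (hfK i).comp ih

lemma measurable_wordMap [MeasurableSpace α] {f : ι → α → α} (hf : ∀ i, Measurable (f i))
    (σ : List ι) : Measurable (wordMap f σ) := by
  induction σ with
  | nil => exact measurable_id
  | cons i σ ih => exact (hf i).comp ih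

namespace IsSelfSimilar

variable [Fintype ι] [MeasurableSpace α] {w : ι → ℝ≥0∞} {f : ι → α → α} {P : Measure α}
  {K : Set α}

lemma sum_weight_eq_one [IsProbabilityMeasure P] (hP : IsSelfSimilar w f P)
    (hf : ∀ i, Measurable (f i)) : ∑ i, w i = 1 := by
  calc ∑ i, w i = (∑ i, w i • P.map (f i)) univ := by simp [Measure.map_apply (hf _)]
    _ = P univ := congrArg (· univ) hP.symm
    _ = 1 := measure_univ

lemma weight_ne_top [IsProbabilityMeasure P] (hP : IsSelfSimilar w f P)
    (hf : ∀ i, Measurable (f i)) (i : ι) : w i ≠ ∞ :=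
  ENNReal.sum_ne_top.1 (hP.sum_weight_eq_one hf ▸ ENNReal.one_ne_top) i (Finset.mem_univ i)

lemma measure_eq_sum (hP : IsSelfSimilar w f P) (hf : ∀ i, MeasurableEmbedding (f i)) (s : Set α) :
    P s = ∑ i, w i * P (f i ⁻¹' s) := by
  calc P s = (∑ i, w i • P.map (f i)) s := congrArg (· s) hP
    _ = ∑ i, w i * P (f i ⁻¹' s) := by
      simp only [Measure.coe_finsetSum, Finset.sum_apply, Measure.smul_apply, smul_eq_mul,
        (hf _).map_apply]

lemma ae_of_forall_ae_comp (hP : IsSelfSimilar w f P) (hf : ∀ i, MeasurableEmbedding (f i))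
    {p : α → Prop} (h : ∀ i, ∀ᵐ x ∂P, p (f i x)) : ∀ᵐ x ∂P, p x := by
  rw [ae_iff, hP.measure_eq_sum hf]
  exact Finset.sum_eq_zero fun i _ ↦ mul_eq_zero_of_right _ (h i)

lemma restrict_image (hP : IsSelfSimilar w f P) (hf : ∀ i, MeasurableEmbedding (f i))
    (hPK : ∀ᵐ x ∂P, x ∈ K) (hdisj : Pairwise (Function.onFun Disjoint fun i ↦ f i '' K))
    {A : Set α} (hAK : A ⊆ K) (i : ι) :
    P.restrict (f i '' A) = w i • (P.restrict A).map (f i) := by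
  have hnull : ∀ s, ∀ j ≠ i, P (f j ⁻¹' (s ∩ f i '' A)) = 0 := by
    refine fun s j hji ↦ measure_mono_null ?_ hPK
    rintro x ⟨-, hx⟩ hxK
    exact (hdisj hji).notMem_of_mem_left (mem_image_of_mem _ hxK) (image_mono hAK hx)
  ext s hs
  rw [Measure.restrict_apply hs, hP.measure_eq_sum hf,
    Finset.sum_eq_single i (fun j _ hji ↦ by rw [hnull s j hji, mul_zero])
      (fun hi ↦ absurd (Finset.mem_univ i) hi),
    preimage_inter, (hf i).injective.preimage_image, Measure.smul_apply, smul_eq_mul,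
    (hf i).map_apply, Measure.restrict_apply ((hf i).measurable hs)]

lemma restrict_image_wordMap (hP : IsSelfSimilar w f P) (hf : ∀ i, MeasurableEmbedding (f i))
    (hPK : ∀ᵐ x ∂P, x ∈ K) (hfK : ∀ i, MapsTo (f i) K K)
    (hdisj : Pairwise (Function.onFun Disjoint fun i ↦ f i '' K)) (σ : List ι) :
    P.restrict (wordMap f σ '' K) = (σ.map w).prod • P.map (wordMap f σ) := by
  induction σ with
  | nil =>
    have hid : wordMap f [] = id := rfl
    rw [hid, image_id, Measure.map_id, Measure.restrict_eq_self_of_ae_mem hPK, List.map_nil,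
      List.prod_nil, one_smul]
  | cons i σ ih =>
    have hfm := fun j ↦ (hf j).measurable
    rw [wordMap_cons, image_comp,
      hP.restrict_image hf hPK hdisj (mapsTo_wordMap hfK σ).image_subset, ih, Measure.map_smul,
      Measure.map_map (hfm i) (measurable_wordMap hfm σ), smul_smul, List.map_cons, List.prod_cons]

end IsSelfSimilar

end SelfSimilar

section AffineMaps

variable {α E F : Type*} [MeasurableSpace α] [NormedAddCommGroup E] [NormedSpace ℝ E]
  [NormedAddCommGroup F] [NormedSpace ℝ F]

lemma integrable_continuousAffineMap_comp {μ : Measure α} [IsFiniteMeasure μ] {φ : α → E}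
    (g : E →ᴬ[ℝ] F) (hφ : Integrable φ μ) : Integrable (fun x ↦ g (φ x)) μ := by
  rw [g.decomp]
  exact (g.contLinear.integrable_comp hφ).add (integrable_const (g 0))

lemma integral_continuousAffineMap_comp [CompleteSpace E] [CompleteSpace F] {μ : Measure α}
    [IsProbabilityMeasure μ] {φ : α → E} (g : E →ᴬ[ℝ] F) (hφ : Integrable φ μ) :
    ∫ x, g (φ x) ∂μ = g (∫ x, φ x ∂μ) := by
  have hg : ∀ y, g y = g.contLinear y + g 0 := fun y ↦ by simpa using g.map_vadd 0 y
  calc ∫ x, g (φ x) ∂μ = ∫ x, (g.contLinear (φ x) + g 0) ∂μ := by simp only [← hg]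
    _ = g.contLinear (∫ x, φ x ∂μ) + g 0 := by
      rw [integral_add (g.contLinear.integrable_comp hφ) (integrable_const _),
        g.contLinear.integral_comp_comm hφ, integral_const, probReal_univ, one_smul]
    _ = g (∫ x, φ x ∂μ) := (hg _).symm

variable {ι : Type*} {f : ι → E →ᴬ[ℝ] E} [MeasurableSpace E] {P : Measure E}

lemma integrable_wordMap [IsFiniteMeasure P] (hint : Integrable (fun x ↦ x) P) (σ : List ι) :
    Integrable (wordMap (fun i ↦ f i) σ) P := by
  induction σ with
  | nil => exact hint
  | cons i σ ih => exact integrable_continuousAffineMap_comp (f i) ih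

variable [CompleteSpace E]

lemma integral_wordMap [IsProbabilityMeasure P] (hint : Integrable (fun x ↦ x) P) (σ : List ι) :
    ∫ x, wordMap (fun i ↦ f i) σ x ∂P = wordMap (fun i ↦ f i) σ (∫ x, x ∂P) := by
  induction σ with
  | nil => rfl
  | cons i σ ih =>
    calc ∫ x, f i (wordMap (fun i ↦ f i) σ x) ∂P = f i (∫ x, wordMap (fun i ↦ f i) σ x ∂P) :=
          integral_continuousAffineMap_comp (f i) (integrable_wordMap hint σ)
      _ = f i (wordMap (fun i ↦ f i) σ (∫ x, x ∂P)) := by rw [ih]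

namespace IsSelfSimilar

variable [Fintype ι] [BorelSpace E] [SecondCountableTopology E] {w : ι → ℝ≥0∞}
  [IsProbabilityMeasure P] {K : Set E}

lemma mean_eq_sum (hP : IsSelfSimilar w (fun i ↦ f i) P) (hint : Integrable (fun x ↦ x) P) :
    ∫ x, x ∂P = ∑ i, (w i).toReal • f i (∫ x, x ∂P) := by
  have hintf (i : ι) : Integrable (fun x ↦ x) (w i • P.map (f i)) := by
    refine Integrable.smul_measure ?_ (hP.weight_ne_top (fun j ↦ (f j).continuous.measurable) i)
    rw [integrable_map_measure (by fun_prop) (f i).continuous.aemeasurable]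
    exact integrable_continuousAffineMap_comp (f i) hint
  calc ∫ x, x ∂P = ∫ x, x ∂(∑ i, w i • P.map (f i)) := congrArg (fun μ ↦ ∫ x, x ∂μ) hP
    _ = ∑ i, (w i).toReal • ∫ x, f i x ∂P := by
      rw [integral_finsetSum_measure fun i _ ↦ hintf i]
      exact Finset.sum_congr rfl fun i _ ↦ by
        rw [integral_smul_measure, integral_map (f i).continuous.aemeasurable (by fun_prop)]
    _ = ∑ i, (w i).toReal • f i (∫ x, x ∂P) :=
      Finset.sum_congr rfl fun i _ ↦ by rw [integral_continuousAffineMap_comp (f i) hint]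

lemma setAverage_image_wordMap (hP : IsSelfSimilar w (fun i ↦ f i) P) (hw : ∀ i, w i ≠ 0)
    (hf : ∀ i, MeasurableEmbedding (f i)) (hint : Integrable (fun x ↦ x) P)
    (hPK : ∀ᵐ x ∂P, x ∈ K) (hfK : ∀ i, MapsTo (f i) K K)
    (hdisj : Pairwise (Function.onFun Disjoint fun i ↦ f i '' K)) (σ : List ι) :
    ⨍ x in wordMap (fun i ↦ f i) σ '' K, x ∂P = wordMap (fun i ↦ f i) σ (∫ x, x ∂P) := by
  have hfm := fun i ↦ (hf i).measurable
  have hmeas : Measurable (wordMap (fun i ↦ f i) σ) := measurable_wordMap hfm σ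
  have hprod₀ : (σ.map w).prod ≠ 0 := by simp [List.prod_eq_zero_iff, hw]
  have hprod : (σ.map w).prod ≠ ∞ :=
    List.prod_induction (· ≠ ∞) (fun _ _ ↦ ENNReal.mul_ne_top) ENNReal.one_ne_top
      (by simpa using fun i _ ↦ hP.weight_ne_top hfm i)
  have := Measure.isProbabilityMeasure_map (μ := P) hmeas.aemeasurable
  calc ⨍ x in wordMap (fun i ↦ f i) σ '' K, x ∂P = ∫ x, x ∂(P.map (wordMap (fun i ↦ f i) σ)) := by
        rw [hP.restrict_image_wordMap hf hPK hfK hdisj, average_eq', Measure.smul_apply,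
          measure_univ, smul_eq_mul, mul_one, smul_smul, ENNReal.inv_mul_cancel hprod₀ hprod,
          one_smul]
    _ = ∫ x, wordMap (fun i ↦ f i) σ x ∂P := integral_map hmeas.aemeasurable (by fun_prop)
    _ = wordMap (fun i ↦ f i) σ (∫ x, x ∂P) := integral_wordMap hint σ

end IsSelfSimilar

end AffineMaps

section Voronoi

variable {R : Type*} [CommRing R] [LinearOrder R] [IsStrictOrderedRing R]

lemma abs_sub_le_abs_sub_iff {a b x : R} :
    |x - a| ≤ |x - b| ↔ 0 ≤ (b - a) * (a + b - 2 * x) := by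
  rw [← sq_le_sq, ← sub_nonneg]
  ring_nf

lemma isLeast_image_abs_sub_iff {s : Set R} {a x : R} (ha : a ∈ s) :
    IsLeast ((fun b ↦ |x - b|) '' s) |x - a| ↔ ∀ b ∈ s, 0 ≤ (b - a) * (a + b - 2 * x) := by
  simp only [IsLeast, mem_image_of_mem (fun b ↦ |x - b|) ha, true_and, mem_lowerBounds,
    forall_mem_image, abs_sub_le_abs_sub_iff]

end Voronoi

section Cantor

/-- The contractions `x ↦ x / 3` and `x ↦ x / 3 + 2 / 3` of the Cantor system, indexed by `0`
and `1`. -/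
noncomputable def cantorMap (i : Fin 2) : ℝ →ᴬ[ℝ] ℝ :=
  (3⁻¹ : ℝ) • ContinuousAffineMap.id ℝ ℝ + ContinuousAffineMap.const ℝ ℝ (2 / 3 * (i : ℝ))

lemma cantorMap_apply (i : Fin 2) (x : ℝ) : cantorMap i x = x / 3 + 2 / 3 * (i : ℝ) := by
  simp [cantorMap, div_eq_inv_mul]

lemma cantorMap_image_Icc (i : Fin 2) (a b : ℝ) :
    cantorMap i '' Icc a b = Icc (cantorMap i a) (cantorMap i b) := by
  have haffine : ⇑(cantorMap i) = fun x ↦ 3⁻¹ * x + 2 / 3 * (i : ℝ) := by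
    ext x
    rw [cantorMap_apply, div_eq_inv_mul]
  rw [haffine, image_affine_Icc' (by norm_num)]

lemma measurableEmbedding_cantorMap (i : Fin 2) : MeasurableEmbedding (cantorMap i) :=
  (cantorMap i).continuous.measurableEmbedding fun x y hxy ↦ by
    simpa [cantorMap_apply] using hxy

lemma mapsTo_cantorMap (i : Fin 2) : MapsTo (cantorMap i) (Icc 0 1) (Icc 0 1) := by
  rintro x ⟨hx₀, hx₁⟩
  have hi : (i : ℝ) ≤ 1 := mod_cast Nat.le_of_lt_succ i.isLt
  rw [cantorMap_apply]
  exact ⟨by positivity, by linarith⟩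

lemma pairwise_disjoint_cantorMap_image :
    Pairwise (Function.onFun Disjoint fun i ↦ cantorMap i '' Icc 0 1) := by
  have hdisj : Disjoint (cantorMap 0 '' Icc 0 1) (cantorMap 1 '' Icc 0 1) := by
    rw [cantorMap_image_Icc, cantorMap_image_Icc, disjoint_left]
    rintro x ⟨-, hx₀⟩ ⟨hx₁, -⟩
    simp only [cantorMap_apply, Fin.val_zero, Fin.val_one, Nat.cast_zero, Nat.cast_one] at hx₀ hx₁
    linarith
  intro i j hij
  fin_cases i <;> fin_cases j
  · exact absurd rfl hij
  · exact hdisj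
  · exact hdisj.symm
  · exact absurd rfl hij

/-- The cell `J_σ` of the Cantor set: the image of `[0, 1]` under the composition `S_σ`. The digits
`1` and `2` of the usual notation are `0` and `1` here. -/
noncomputable def cantorCell (σ : List (Fin 2)) : Set ℝ :=
  wordMap (fun i ↦ cantorMap i) σ '' Icc 0 1

lemma cantorCell_eq_Icc (σ : List (Fin 2)) :
    cantorCell σ = Icc (wordMap (fun i ↦ cantorMap i) σ 0) (wordMap (fun i ↦ cantorMap i) σ 1) := by
  induction σ with
  | nil => exact image_id _
  | cons i σ ih =>
    rw [cantorCell, wordMap_cons, image_comp]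
    exact (congrArg (cantorMap i '' ·) ih).trans (cantorMap_image_Icc i _ _)

lemma cantorCell_zero : cantorCell [0] = Icc 0 (1 / 3) := by
  norm_num [cantorCell_eq_Icc, wordMap, cantorMap_apply]

lemma cantorCell_one_zero : cantorCell [1, 0] = Icc (2 / 3) (7 / 9) := by
  norm_num [cantorCell_eq_Icc, wordMap, cantorMap_apply]

lemma cantorCell_one_one : cantorCell [1, 1] = Icc (8 / 9) 1 := by
  norm_num [cantorCell_eq_Icc, wordMap, cantorMap_apply]

variable {P : Measure ℝ}

lemma cantor_mean [IsProbabilityMeasure P]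
    (hP : IsSelfSimilar (fun _ ↦ 2⁻¹) (fun i ↦ cantorMap i) P)
    (hmem : ∀ᵐ x ∂P, x ∈ Icc 0 1) : ∫ x, x ∂P = 1 / 2 := by
  have hfixed := hP.mean_eq_sum (.of_mem_Icc 0 1 aemeasurable_id hmem)
  simp only [Fin.sum_univ_two, cantorMap_apply, ENNReal.toReal_inv, ENNReal.toReal_ofNat,
    smul_eq_mul, Fin.val_zero, Fin.val_one, Nat.cast_zero, Nat.cast_one] at hfixed
  linarith

lemma cantor_centroid [IsProbabilityMeasure P]
    (hP : IsSelfSimilar (fun _ ↦ 2⁻¹) (fun i ↦ cantorMap i) P)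
    (hmem : ∀ᵐ x ∂P, x ∈ Icc 0 1) (σ : List (Fin 2)) :
    ⨍ x in cantorCell σ, x ∂P = wordMap (fun i ↦ cantorMap i) σ (1 / 2) := by
  rw [← cantor_mean hP hmem]
  exact hP.setAverage_image_wordMap (by simp) measurableEmbedding_cantorMap
    (.of_mem_Icc 0 1 aemeasurable_id hmem) hmem mapsTo_cantorMap pairwise_disjoint_cantorMap_image σ

lemma ae_mem_union_cantorCell (hP : IsSelfSimilar (fun _ ↦ 2⁻¹) (fun i ↦ cantorMap i) P)
    (hmem : ∀ᵐ x ∂P, x ∈ Icc 0 1) :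
    ∀ᵐ x ∂P, x ∈ cantorCell [0] ∪ cantorCell [1, 0] ∪ cantorCell [1, 1] := by
  have hsplit : ∀ᵐ x ∂P, x ∈ cantorCell [0] ∪ cantorCell [1] :=
    hP.ae_of_forall_ae_comp measurableEmbedding_cantorMap <| Fin.forall_fin_two.2
      ⟨hmem.mono fun x hx ↦ .inl (mem_image_of_mem _ hx),
        hmem.mono fun x hx ↦ .inr (mem_image_of_mem _ hx)⟩
  refine hP.ae_of_forall_ae_comp measurableEmbedding_cantorMap <| Fin.forall_fin_two.2
    ⟨hmem.mono fun x hx ↦ .inl (.inl (mem_image_of_mem _ hx)), hsplit.mono ?_⟩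
  rintro _ (⟨x, hx, rfl⟩ | ⟨x, hx, rfl⟩)
  · exact .inl (.inr (mem_image_of_mem _ hx))
  · exact .inr (mem_image_of_mem _ hx)

end Cantor

theorem stmt_17 (P : Measure ℝ) [IsProbabilityMeasure P]
    (hP : P = (2⁻¹ : ENNReal) • P.map (fun x : ℝ => x / 3) +
              (2⁻¹ : ENNReal) • P.map (fun x : ℝ => x / 3 + 2 / 3))
    (hsupp : P (Set.Icc (0 : ℝ) 1) = 1) :
    P (Set.Icc (0 : ℝ) (1 / 3) ∪ Set.Icc (2 / 3) (7 / 9) ∪ Set.Icc (8 / 9) 1) = 1 ∧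
    (P (Set.Icc (0 : ℝ) (1 / 3))).toReal⁻¹ *
        (∫ x in Set.Icc (0 : ℝ) (1 / 3), x ∂P) = 1 / 6 ∧
    (P (Set.Icc (2 / 3 : ℝ) (7 / 9))).toReal⁻¹ *
        (∫ x in Set.Icc (2 / 3 : ℝ) (7 / 9), x ∂P) = 13 / 18 ∧
    (P (Set.Icc (8 / 9 : ℝ) 1)).toReal⁻¹ *
        (∫ x in Set.Icc (8 / 9 : ℝ) 1, x ∂P) = 17 / 18 ∧
    (∀ x ∈ Set.Icc (0 : ℝ) (1 / 3),
      IsLeast ((fun b => |x - b|) '' ({1 / 6, 13 / 18, 17 / 18} : Set ℝ)) |x - 1 / 6|) ∧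
    (∀ x ∈ Set.Icc (2 / 3 : ℝ) (7 / 9),
      IsLeast ((fun b => |x - b|) '' ({1 / 6, 13 / 18, 17 / 18} : Set ℝ)) |x - 13 / 18|) ∧
    (∀ x ∈ Set.Icc (8 / 9 : ℝ) 1,
      IsLeast ((fun b => |x - b|) '' ({1 / 6, 13 / 18, 17 / 18} : Set ℝ)) |x - 17 / 18|) := by
  have hmem : ∀ᵐ x ∂P, x ∈ Icc 0 1 := (mem_ae_iff_prob_eq_one measurableSet_Icc).2 hsupp
  have hself : IsSelfSimilar (fun _ ↦ 2⁻¹) (fun i ↦ cantorMap i) P := by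
    simpa [IsSelfSimilar, Fin.sum_univ_two, funext (cantorMap_apply _)] using hP
  have hcentroid (σ) : (P (cantorCell σ)).toReal⁻¹ * ∫ x in cantorCell σ, x ∂P =
      wordMap (fun i ↦ cantorMap i) σ (1 / 2) :=
    (setAverage_eq _ _ _).symm.trans (cantor_centroid hself hmem σ)
  refine ⟨?_, ?_, ?_, ?_, ?_, ?_, ?_⟩
  · have hcover := ae_mem_union_cantorCell hself hmem
    rw [cantorCell_zero, cantorCell_one_zero, cantorCell_one_one] at hcover
    refine (mem_ae_iff_prob_eq_one ?_).1 hcover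
    exact (measurableSet_Icc.union measurableSet_Icc).union measurableSet_Icc
  · rw [← cantorCell_zero, hcentroid]; norm_num [wordMap, cantorMap_apply]
  · rw [← cantorCell_one_zero, hcentroid]; norm_num [wordMap, cantorMap_apply]
  · rw [← cantorCell_one_one, hcentroid]; norm_num [wordMap, cantorMap_apply]
  all_goals
    refine fun x ⟨hx₀, hx₁⟩ ↦ (isLeast_image_abs_sub_iff (by simp)).2 ?_
    simp only [forall_mem_insert, mem_singleton_iff, forall_eq]
    refine ⟨?_, ?_, ?_⟩ <;> linarith
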